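/- Let V = ℝ[k₀,0] ⊕ ⊕_{μ∈ℳ} ℝ[k_μ,μ] be a finite-dimensional orthogonal torus representation. Then the element χ_𝕋(S^V) is invertible in the Euler ring U(𝕋) and its inverse satisfies χ_𝕋(S^V)^{−1} = (−1)^{k₀} ( 𝕀 + Σ_{μ∈ℳ} k_μ χ_𝕋(𝕋/H_μ⁺) ) + 𝒪, where 𝒪 is a ℤ-linear combination of elements χ_𝕋(𝕋/H⁺) with dim H ≤ dim 𝕋 − 2. -/

import Mathlib

/-!
STATEMENT 4 (invertibility of `χ_𝕋(S^V)` in `U(𝕋)` and the formula for its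
inverse, equation (2.4) of the paper).

The Euler ring `U(𝕋)` of the torus `𝕋` is modelled as the free ℤ-module
`Sub →₀ ℤ` on the closed subgroups of `𝕋` (the generator corresponding to `H` is
`Finsupp.single H 1 = χ_𝕋(𝕋/H⁺)`), with multiplication `eulerMul` determined by
`χ_𝕋(𝕋/H⁺) ⋆ χ_𝕋(𝕋/H'⁺) = χ_𝕋(𝕋/(H∩H')⁺)` if
`dim H + dim H' = dim 𝕋 + dim (H∩H')` and `Θ = 0` otherwise; the unit is
`𝕀 = χ_𝕋(𝕋/𝕋⁺) = Finsupp.single top 1`.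

A finite-dimensional orthogonal `𝕋`-representation
`V = ℝ[k₀,0] ⊕ ⊕_{μ∈ℳ} ℝ[k_μ,μ]` is recorded by its multiplicities
`(k₀, k) : ℕ × (Mw →₀ ℕ)`; `chiS k₀ k` denotes `χ_𝕋(S^V)`, characterized by the
hypotheses below (direct-sum multiplicativity and the values on `ℝ[1,0]` and
`ℝ[1,μ]`), from which one also has
`χ_𝕋(S^V) = (−1)^{k₀}(𝕀 − Σ_{μ∈ℳ} k_μ χ_𝕋(𝕋/H_μ⁺)) + 𝒪`.

Conclusion: `χ_𝕋(S^V)` is invertible in `U(𝕋)` and its inverse satisfies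
`χ_𝕋(S^V)⁻¹ = (−1)^{k₀} (𝕀 + Σ_{μ∈ℳ} k_μ χ_𝕋(𝕋/H_μ⁺)) + 𝒪`, with `𝒪` a
ℤ-linear combination of generators `χ_𝕋(𝕋/H⁺)` with `dim H ≤ dim 𝕋 − 2`.
-/

/-- The Euler-ring multiplication of a torus on the free ℤ-module on the set of
closed subgroups. -/
noncomputable def eulerMul {Sub : Type*} (dimT : ℕ) (dim : Sub → ℕ)
    (inter : Sub → Sub → Sub) (x y : Sub →₀ ℤ) : Sub →₀ ℤ :=
  x.sum fun H a => y.sum fun K b =>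
    if dim H + dim K = dimT + dim (inter H K)
    then Finsupp.single (inter H K) (a * b) else 0

/-- `lowDim dimT dim y` : `y` is a ℤ-linear combination of generators
`χ_𝕋(𝕋/H⁺)` with `dim H ≤ dim 𝕋 − 2`. -/
def lowDim {Sub : Type*} (dimT : ℕ) (dim : Sub → ℕ) (y : Sub →₀ ℤ) : Prop :=
  ∀ H ∈ y.support, dim H + 2 ≤ dimT

/-!
For an arbitrary operation `inter` the product `⋆` need not be associative, but the classes
`χ_𝕋(S^V)` multiply like the representations `V` add, so they lie in the image of a monoid ring,
which is associative and unital. Trivial summands only contribute the sign `(-1)^{k₀}`, so let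
`k₀ = 0`. Then the inverse of `χ_𝕋(S^V)` is the geometric series in `𝕀 - χ_𝕋(S^V)`. This element
has codimension at least one and codimensions add under `⋆`, so the series is finite and all but
its first two terms have codimension at least two. Modulo codimension two,
`χ_𝕋(S^V) ↦ 𝕀 - χ_𝕋(S^V)` turns products into sums, which gives the first-order term
`∑ k_μ χ_𝕋(𝕋/H_μ⁺)`.
-/

section GradedPow

variable {A R σ Φ : Type*} [Monoid A] [Mul R] [SetLike σ R] [FunLike Φ A R] [MulHomClass Φ A R]

theorem map_pow_succ_mem_graded (F : ℕ → σ) [SetLike.GradedMul F] (φ : Φ) {a : A}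
    (ha : φ a ∈ F 1) (i : ℕ) : φ (a ^ (i + 1)) ∈ F (i + 1) := by
  induction i with
  | zero => simpa using ha
  | succ i ih =>
    rw [pow_succ, map_mul]
    exact SetLike.mul_mem_graded ih ha

end GradedPow

theorem mem_of_sub_linearCombination_mem {ι R : Type*} [AddCommGroup R] {S T : AddSubgroup R}
    (hTS : T ≤ S) {g : ι → R} (hg : ∀ i, g i ∈ S) {k : ι →₀ ℕ} {x : R}
    (hx : x - Finsupp.linearCombination ℕ g k ∈ T) : x ∈ S := by
  have hcomb : Finsupp.linearCombination ℕ g k ∈ S := sum_mem fun i _ => nsmul_mem (hg i) _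
  simpa only [sub_add_cancel] using add_mem (hTS hx) hcomb

section Filtration

variable {R : Type*} [NonUnitalNonAssocRing R] {F : ℕ → AddSubgroup R} [SetLike.GradedMul F]

theorem exists_inverse_map_sub_mem {A Φ : Type*} [Ring A] [FunLike Φ A R]
    [NonUnitalRingHomClass Φ A R] (φ : Φ) (hF : Antitone F) {N : ℕ} (hN : F N = ⊥) {u : A}
    (hu : φ (1 - u) ∈ F 1) :
    ∃ v, φ (u * v) = φ 1 ∧ φ (v * u) = φ 1 ∧ φ (v - (1 + (1 - u))) ∈ F 2 := by
  set n := 1 - u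
  have map_pow_eq_zero : φ (n ^ (N + 2)) = 0 := by
    have hmem : φ (n ^ (N + 2)) ∈ F N := hF (by omega) (map_pow_succ_mem_graded F φ hu (N + 1))
    simpa only [hN, AddSubgroup.mem_bot] using hmem
  have hu' : u = 1 - n := (sub_sub_cancel 1 u).symm
  refine ⟨∑ i ∈ Finset.range (N + 2), n ^ i, ?_, ?_, ?_⟩
  · rw [hu', mul_neg_geom_sum, map_sub, map_pow_eq_zero, sub_zero]
  · rw [hu', geom_sum_mul_neg, map_sub, map_pow_eq_zero, sub_zero]
  · have tail : ∑ i ∈ Finset.range (N + 2), n ^ i - (1 + n)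
        = ∑ i ∈ Finset.range N, n ^ (i + 2) := by
      rw [Finset.sum_range_succ', Finset.sum_range_succ', pow_zero, zero_add, pow_one]
      abel
    rw [tail, map_sum]
    exact sum_mem fun i _ => hF (by omega) (map_pow_succ_mem_graded F φ hu (i + 1))

theorem exists_inverse_sub_mem {M : Type*} [AddMonoid M] {χ : M → R}
    (hχ : ∀ a b, χ (a + b) = χ a * χ b) (hF : Antitone F) {N : ℕ} (hN : F N = ⊥) {m : M}
    (hm : χ 0 - χ m ∈ F 1) :
    ∃ y, χ m * y = χ 0 ∧ y * χ m = χ 0 ∧ y - (χ 0 + (χ 0 - χ m)) ∈ F 2 := by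
  let φ : AddMonoidAlgebra ℤ M →ₙₐ[ℤ] R :=
    AddMonoidAlgebra.liftMagma ℤ ⟨fun a => χ a.toAdd, fun a b => hχ a.toAdd b.toAdd⟩
  have φ_single (a : M) : φ (AddMonoidAlgebra.single a 1) = χ a := by simp [φ]
  have φ_one : φ 1 = χ 0 := φ_single 0
  obtain ⟨v, hl, hr, hv⟩ := exists_inverse_map_sub_mem φ hF hN
    (u := AddMonoidAlgebra.single m 1) (by simpa [φ_single, φ_one] using hm)
  exact ⟨φ v, by simpa [φ_single, φ_one] using hl, by simpa [φ_single, φ_one] using hr,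
    by simpa [φ_single, φ_one] using hv⟩

theorem map_zero_sub_map_add {M : Type*} [AddMonoid M] {χ : M → R}
    (hχ : ∀ a b, χ (a + b) = χ a * χ b) (a b : M) :
    χ 0 - χ (a + b) = (χ 0 - χ a) + (χ 0 - χ b) - (χ 0 - χ a) * (χ 0 - χ b) := by
  simp only [sub_mul, mul_sub, ← hχ, add_zero, zero_add]
  abel

theorem map_zero_sub_map_sub_linearCombination_mem {ι : Type*} {g : ι → R}
    (hF : Antitone F) (hg : ∀ i, g i ∈ F 1) {χ : (ι →₀ ℕ) → R} (hχ : ∀ k l, χ (k + l) = χ k * χ l)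
    (hχg : ∀ i, χ (Finsupp.single i 1) = χ 0 - g i) (k : ι →₀ ℕ) :
    χ 0 - χ k - Finsupp.linearCombination ℕ g k ∈ F 2 := by
  have add_mem_two {k l : ι →₀ ℕ} (hk : χ 0 - χ k - Finsupp.linearCombination ℕ g k ∈ F 2)
      (hl : χ 0 - χ l - Finsupp.linearCombination ℕ g l ∈ F 2) :
      χ 0 - χ (k + l) - Finsupp.linearCombination ℕ g (k + l) ∈ F 2 := by
    have hprod : (χ 0 - χ k) * (χ 0 - χ l) ∈ F 2 :=
      SetLike.mul_mem_graded (mem_of_sub_linearCombination_mem (hF one_le_two) hg hk)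
        (mem_of_sub_linearCombination_mem (hF one_le_two) hg hl)
    rw [map_zero_sub_map_add hχ, map_add]
    convert sub_mem (add_mem hk hl) hprod using 1
    abel
  induction k using Finsupp.induction_linear with
  | zero => simp
  | add k l hk hl => exact add_mem_two hk hl
  | single i n =>
    induction n with
    | zero => simp
    | succ n ih =>
      rw [Finsupp.single_add]
      exact add_mem_two ih (by simp [hχg])

theorem exists_inverse_sub_linearCombination_mem {ι : Type*} {g : ι → R} (hF : Antitone F)
    {N : ℕ} (hN : F N = ⊥) (hg : ∀ i, g i ∈ F 1) {χ : (ι →₀ ℕ) → R}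
    (hχ : ∀ k l, χ (k + l) = χ k * χ l) (hχg : ∀ i, χ (Finsupp.single i 1) = χ 0 - g i)
    (k : ι →₀ ℕ) :
    ∃ y, χ k * y = χ 0 ∧ y * χ k = χ 0 ∧ y - (χ 0 + Finsupp.linearCombination ℕ g k) ∈ F 2 := by
  have expansion := map_zero_sub_map_sub_linearCombination_mem hF hg hχ hχg k
  obtain ⟨y, hl, hr, hy⟩ := exists_inverse_sub_mem hχ hF hN
    (mem_of_sub_linearCombination_mem (hF one_le_two) hg expansion)
  refine ⟨y, hl, hr, ?_⟩
  convert add_mem hy expansion using 1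
  abel

end Filtration

theorem map_eq_neg_one_pow_smul {R M : Type*} [NonUnitalNonAssocRing R] [AddMonoid M]
    {χ : ℕ → M → R} (hmul : ∀ (a b : ℕ) (k l : M), χ (a + b) (k + l) = χ a k * χ b l)
    (htriv : χ 1 0 = -χ 0 0) (a : ℕ) (k : M) : χ a k = (-1 : ℤ) ^ a • χ 0 k := by
  have hsucc (b : ℕ) : χ (b + 1) k = -χ b k := by
    have h := hmul 1 b 0 k
    rwa [htriv, neg_mul, ← hmul, zero_add, zero_add, add_comm 1 b] at h
  induction a with
  | zero => simp
  | succ b ih => rw [hsucc, ih, pow_succ, mul_neg_one, neg_smul]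

/-- The Euler ring `U(𝕋)`: the free ℤ-module on the closed subgroups, as a type synonym so that
its product is `eulerMul` rather than the pointwise product of finitely supported functions. -/
def EulerRing {Sub : Type*} (_dimT : ℕ) (_dim : Sub → ℕ) (_inter : Sub → Sub → Sub) : Type _ :=
  Sub →₀ ℤ

namespace EulerRing

variable {Sub : Type*} {dimT : ℕ} {dim : Sub → ℕ} {inter : Sub → Sub → Sub}

noncomputable instance : AddCommGroup (EulerRing dimT dim inter) :=
  inferInstanceAs (AddCommGroup (Sub →₀ ℤ))

theorem eulerMul_add_left (x x' y : Sub →₀ ℤ) :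
    eulerMul dimT dim inter (x + x') y
      = eulerMul dimT dim inter x y + eulerMul dimT dim inter x' y := by
  classical
  refine Finsupp.sum_add_index' (fun H => ?_) fun H a a' => ?_
  · simp
  · rw [← Finsupp.sum_add]
    refine Finsupp.sum_congr fun K _ => ?_
    split_ifs <;> simp [add_mul]

theorem eulerMul_add_right (x y y' : Sub →₀ ℤ) :
    eulerMul dimT dim inter x (y + y')
      = eulerMul dimT dim inter x y + eulerMul dimT dim inter x y' := by
  classical
  unfold eulerMul
  rw [← Finsupp.sum_add]
  refine Finsupp.sum_congr fun H _ => Finsupp.sum_add_index' (fun K => ?_) fun K b b' => ?_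
  · simp
  · split_ifs <;> simp [mul_add]

noncomputable instance : NonUnitalNonAssocRing (EulerRing dimT dim inter) where
  mul := eulerMul dimT dim inter
  left_distrib := eulerMul_add_right
  right_distrib := eulerMul_add_left
  zero_mul x := by
    change eulerMul dimT dim inter 0 x = 0
    simp [eulerMul]
  mul_zero x := by
    change eulerMul dimT dim inter x 0 = 0
    simp [eulerMul, Finsupp.sum]

variable (dimT dim inter) in
/-- The descending filtration of the Euler ring by codimension: its `j`-th term is spanned by the
generators `χ_𝕋(𝕋/H⁺)` with `dim H ≤ dim 𝕋 − j`. -/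
noncomputable def codimFiltration (j : ℕ) : AddSubgroup (EulerRing dimT dim inter) :=
  (Finsupp.supported ℤ ℤ {H | dim H + j ≤ dimT}).toAddSubgroup

theorem antitone_codimFiltration : Antitone (codimFiltration dimT dim inter) :=
  fun _ _ hij => Finsupp.supported_mono
    (R := ℤ) (M := ℤ) fun _ hH => (Nat.add_le_add_left hij _).trans hH

theorem codimFiltration_eq_bot : codimFiltration dimT dim inter (dimT + 1) = ⊥ := by
  have hempty : {H | dim H + (dimT + 1) ≤ dimT} = ∅ := by
    ext H
    simp only [Set.mem_ofPred_eq, Set.mem_empty_iff_false, iff_false]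
    omega
  rw [codimFiltration, hempty, Finsupp.supported_empty]
  rfl

instance : SetLike.GradedMul (codimFiltration dimT dim inter) where
  mul_mem i j x y hx hy := by
    change eulerMul dimT dim inter x y ∈ Finsupp.supported ℤ ℤ {H | dim H + (i + j) ≤ dimT}
    refine Submodule.sum_mem _ fun H hH => Submodule.sum_mem _ fun K hK => ?_
    have hHi : dim H + i ≤ dimT := hx hH
    have hKj : dim K + j ≤ dimT := hy hK
    dsimp only
    split_ifs with hdim
    · refine Finsupp.single_mem_supported ℤ _ ?_
      change dim (inter H K) + (i + j) ≤ dimT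
      omega
    · exact Submodule.zero_mem _

end EulerRing

theorem statement4_general {Sub ι : Type*} {dimT : ℕ} {dim : Sub → ℕ} {inter : Sub → Sub → Sub}
    {g : ι → Sub →₀ ℤ} (hg : ∀ i, ∀ H ∈ (g i).support, dim H + 1 ≤ dimT)
    {chiS : ℕ → (ι →₀ ℕ) → (Sub →₀ ℤ)}
    (hmul : ∀ (k₀ l₀ : ℕ) (k l : ι →₀ ℕ),
      chiS (k₀ + l₀) (k + l) = eulerMul dimT dim inter (chiS k₀ k) (chiS l₀ l))
    (htriv : chiS 1 0 = -chiS 0 0)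
    (hrot : ∀ i, chiS 0 (Finsupp.single i 1) = chiS 0 0 - g i) (k₀ : ℕ) (k : ι →₀ ℕ) :
    ∃ y O : Sub →₀ ℤ,
      eulerMul dimT dim inter (chiS k₀ k) y = chiS 0 0 ∧
      eulerMul dimT dim inter y (chiS k₀ k) = chiS 0 0 ∧
      lowDim dimT dim O ∧
      y = (-1 : ℤ) ^ k₀ • (chiS 0 0 + k.sum fun i n => (n : ℤ) • g i) + O := by
  let F := EulerRing.codimFiltration dimT dim inter
  let χ : ℕ → (ι →₀ ℕ) → EulerRing dimT dim inter := chiS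
  let γ : ι → EulerRing dimT dim inter := g
  let ε : ℤ := (-1) ^ k₀
  have hε : ε * ε = 1 := by rw [← mul_pow, neg_one_mul, neg_neg, one_pow]
  have hχ (a b : ℕ) (k l : ι →₀ ℕ) : χ (a + b) (k + l) = χ a k * χ b l := hmul a b k l
  have hsign : χ k₀ k = ε • χ 0 k := map_eq_neg_one_pow_smul hχ htriv k₀ k
  obtain ⟨y, hl, hr, hO⟩ := exists_inverse_sub_linearCombination_mem (F := F) (g := γ)
    EulerRing.antitone_codimFiltration EulerRing.codimFiltration_eq_bot hg (hχ 0 0) hrot k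
  have chi_mul_inverse : χ k₀ k * (ε • y) = χ 0 0 := by
    rw [hsign, smul_mul_smul_comm, hε, one_smul, hl]
  have inverse_mul_chi : (ε • y) * χ k₀ k = χ 0 0 := by
    rw [hsign, smul_mul_smul_comm, hε, one_smul, hr]
  refine ⟨ε • y, ε • (y - (χ 0 0 + Finsupp.linearCombination ℕ γ k)), chi_mul_inverse,
    inverse_mul_chi, zsmul_mem hO ε, ?_⟩
  simp only [natCast_zsmul]
  change ε • y = ε • (χ 0 0 + Finsupp.linearCombination ℕ γ k) + _
  rw [← smul_add, add_sub_cancel]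

theorem statement4
    -- the closed subgroups of the torus 𝕋, their dimensions and intersections
    (Sub : Type*) (dimT : ℕ) (dim : Sub → ℕ) (hdim : ∀ H, dim H ≤ dimT)
    (inter : Sub → Sub → Sub)
    (top : Sub) (hdimtop : dim top = dimT)
    (hinter_top : ∀ H, inter top H = H) (hinter_top' : ∀ H, inter H top = H)
    -- ℳ: the chosen set of nonzero weights (one of each pair ±μ)
    (Mw : Type*)
    -- μ ↦ H_μ = {exp(φ) : μ(φ) ∈ 2πℤ}, the codimension-one isotropy subgroups
    (Hsub : Mw → Sub)
    (hHsub : ∀ μ, dim (Hsub μ) + 1 = dimT)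
    (hHsubInj : Function.Injective Hsub)
    -- χ_𝕋(S^V) as a function of the multiplicities (k₀, k) of V
    (chiS : ℕ → (Mw →₀ ℕ) → (Sub →₀ ℤ))
    -- χ of the zero representation is the unit 𝕀
    (hchi_zero : chiS 0 0 = Finsupp.single top 1)
    -- multiplicativity: χ_𝕋(S^{V ⊕ W}) = χ_𝕋(S^V) ⋆ χ_𝕋(S^W)
    (hchi_mul : ∀ (k₀ l₀ : ℕ) (k l : Mw →₀ ℕ),
      chiS (k₀ + l₀) (k + l) = eulerMul dimT dim inter (chiS k₀ k) (chiS l₀ l))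
    -- χ_𝕋(S^{ℝ[1,0]}) = −𝕀
    (hchi_triv : chiS 1 0 = -Finsupp.single top 1)
    -- χ_𝕋(S^{ℝ[1,μ]}) = 𝕀 − χ_𝕋(𝕋/H_μ⁺)
    (hchi_rot : ∀ μ : Mw, chiS 0 (Finsupp.single μ 1)
      = Finsupp.single top 1 - Finsupp.single (Hsub μ) 1) :
    ∀ (k₀ : ℕ) (k : Mw →₀ ℕ), ∃ y O : Sub →₀ ℤ,
      eulerMul dimT dim inter (chiS k₀ k) y = Finsupp.single top 1 ∧
      eulerMul dimT dim inter y (chiS k₀ k) = Finsupp.single top 1 ∧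
      lowDim dimT dim O ∧
      y = (-1 : ℤ) ^ k₀ •
        (Finsupp.single top 1
          + k.sum fun μ n => (n : ℤ) • Finsupp.single (Hsub μ) 1) + O := by
  intro k₀ k
  rw [← hchi_zero] at hchi_triv hchi_rot ⊢
  exact statement4_general (fun μ => Finsupp.single_mem_supported ℤ 1 (hHsub μ).le) hchi_mul
    hchi_triv hchi_rot k₀ k
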